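/- Let L be a finite relatively complemented lattice with minimal element 0 and maximal element e, with |L| ≥ 2, and let F = L \ {0}. Then Str(F) = L \ {e}, i.e., F shatters exactly the elements different from e. -/

import Mathlib

open scoped Classical

/-- `F` shatters `z`: for every `x ≤ z` there is `w ∈ F` with `w ⊓ z = x`. -/
def Shatters {L : Type*} [SemilatticeInf L] (F : Set L) (z : L) : Prop :=
  ∀ x ≤ z, ∃ w ∈ F, w ⊓ z = x

/-- The set of elements shattered by `F`. -/
def Str {L : Type*} [SemilatticeInf L] (F : Set L) : Set L := {z | Shatters F z}


/-- A finite lattice is relatively complemented iff it has no 3-element interval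
(Björner's characterization). -/
def IsRC (L : Type*) [Lattice L] : Prop :=
  ¬ ∃ x y : L, x < y ∧ ∃! z : L, x < z ∧ z < y

/-!
Removing `⊥` from the whole lattice can only hurt the trace `⊥`, because any other `x ≤ z` is its
own witness; so `z` is shattered iff some nonzero element is disjoint from `z`. For `z = ⊤` there is
none. For `z ≠ ⊤`, take `w` minimal among the elements not below `z`. Everything strictly below `w`
lies below `w ⊓ z`, so a lower cover `c` of `w ⊓ z` would produce the three-element interval
`{c, w ⊓ z, w}`. Hence `w ⊓ z = ⊥`, and `w` is an atom.
-/

theorem shatters_univ_diff_bot_iff {L : Type*} [SemilatticeInf L] [OrderBot L] {z : L} :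
    Shatters (Set.univ \ {⊥}) z ↔ ∃ w ≠ ⊥, Disjoint w z := by
  constructor
  · intro hz
    obtain ⟨w, hw, hwz⟩ := hz ⊥ bot_le
    exact ⟨w, hw.2, disjoint_iff.mpr hwz⟩
  · rintro ⟨w, hw, hwz⟩ x hxz
    by_cases hx : x = ⊥
    · exact ⟨w, ⟨trivial, hw⟩, hwz.eq_bot.trans hx.symm⟩
    · exact ⟨x, ⟨trivial, hx⟩, inf_eq_left.mpr hxz⟩

theorem isGreatest_Iio_inf_of_minimal_not_le {L : Type*} [SemilatticeInf L] {w z : L}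
    (hw : Minimal (¬ · ≤ z) w) : IsGreatest (Set.Iio w) (w ⊓ z) :=
  ⟨inf_lt_left.mpr hw.prop, fun _ hu ↦ le_inf hu.le (not_not.mp (hw.not_prop_of_lt hu))⟩

namespace IsRC

variable {L : Type*} [Lattice L]

theorem not_covBy_of_isGreatest_Iio (hRC : IsRC L) {c m w : L}
    (hm : IsGreatest (Set.Iio w) m) : ¬ c ⋖ m := by
  intro hcm
  refine hRC ⟨c, w, hcm.lt.trans hm.1, m, ⟨hcm.lt, hm.1⟩, ?_⟩
  rintro u ⟨hcu, huw⟩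
  exact (hm.2 huw).eq_of_not_lt (hcm.2 hcu)

variable [OrderBot L] [IsStronglyCoatomic L]

theorem isAtom_of_isGreatest_Iio (hRC : IsRC L) {m w : L}
    (hm : IsGreatest (Set.Iio w) m) : IsAtom w := by
  have hm_bot : m = ⊥ := by
    by_contra hne
    obtain ⟨c, -, hcm⟩ := exists_le_covBy_of_lt (bot_lt_iff_ne_bot.mpr hne)
    exact hRC.not_covBy_of_isGreatest_Iio hm hcm
  subst hm_bot
  exact ⟨hm.1.ne_bot, fun _ hu ↦ le_bot_iff.mp (hm.2 hu)⟩

theorem exists_isAtom_le_not_le [WellFoundedLT L] (hRC : IsRC L) {a z : L} (haz : ¬ a ≤ z) :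
    ∃ p, IsAtom p ∧ p ≤ a ∧ ¬ p ≤ z := by
  obtain ⟨p, hpa, hp⟩ := exists_minimal_le_of_wellFoundedLT (¬ · ≤ z) a haz
  exact ⟨p, hRC.isAtom_of_isGreatest_Iio (isGreatest_Iio_inf_of_minimal_not_le hp), hpa, hp.prop⟩

end IsRC

theorem str_univ_diff_bot_general {L : Type*} [Lattice L] [BoundedOrder L] [WellFoundedLT L]
    [IsStronglyCoatomic L] (hRC : IsRC L) :
    Str ((Set.univ : Set L) \ {⊥}) = Set.univ \ {⊤} := by
  ext z
  suffices (∃ w ≠ ⊥, Disjoint w z) ↔ z ≠ ⊤ by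
    simpa [Str, shatters_univ_diff_bot_iff] using this
  constructor
  · rintro ⟨w, hw, hwz⟩ rfl
    exact hw (disjoint_top.mp hwz)
  · intro hz
    obtain ⟨p, hp, -, hpz⟩ := hRC.exists_isAtom_le_not_le (mt top_le_iff.mp hz)
    exact ⟨p, hp.ne_bot, hp.not_le_iff_disjoint.mp hpz⟩

/-- In a finite RC lattice with at least two elements, the family `L \ {⊥}`
shatters exactly the elements different from `⊤`. -/
theorem str_univ_diff_bot {L : Type*} [Lattice L] [Fintype L] [BoundedOrder L]
    (hRC : IsRC L) (hL : Nontrivial L) :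
    Str ((Set.univ : Set L) \ {⊥}) = Set.univ \ {⊤} :=
  str_univ_diff_bot_general hRC
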